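/- arXiv:2505.18967 — 3 statements merged into one kernel-verified Lean document; each statement's English description precedes it below -/
import Mathlib

section
/- Let p be an odd prime, let m ∈ ℤ with p ∤ m, and let s ∈ ℂ with Re s > 0. Then the double series Σ_{u≥0} Σ_{v≥0} Kl_p(u,v;m) · p^{−u(s+1)} · p^{−v(2s+1)} converges absolutely, and its sum equals (1 − p^{−(s+1)})/(1 − p^{−2s}). -/
/-- The local generalized Kloosterman sum
`Kl_p(u,v;m) = Σ_{a mod p^{u+2v}, p^{2v} ∣ a²−4m} ((a²−4m)/p^{2v} | p^u)`,
where `(· | ·)` is the Jacobi symbol. -/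
noncomputable def Klp (p u v : ℕ) (m : ℤ) : ℤ :=
  ∑ a ∈ Finset.range (p ^ (u + 2*v)),
    if ((p:ℤ) ^ (2*v) ∣ ((a:ℤ)^2 - 4*m)) then
      jacobiSym (((a:ℤ)^2 - 4*m) / (p:ℤ) ^ (2*v)) (p ^ u)
    else 0

/-!
Put `X = p ^ (-(s + 1))` and `Y = p ^ (-(2s + 1))`, and let `N` be the number of square roots of
`4m` modulo `p`. Roots of `a² - 4m` modulo `p` are simple, so by Hensel lifting they lift uniquely
to each `p ^ (2v)`, and along a lift the quotient `(a² - 4m) / p ^ (2v)` is equidistributed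
modulo `p`. Hence `Kl_p(u, v; m)` is `N` times a sum of `χ ^ u` over all residues when `v > 0`,
and the sum of `χ(x² - 4m) ^ u` when `v = 0`, where `χ` is the quadratic character. Summing the
geometric series, the double series is
`(1 - X) / (1 - p²X²) + N (Y - pX²) / ((1 - p²X²)(1 - Y))`,
and `N` disappears because `Y = pX²`.
-/

section Residues

open Finset

variable {M : Type*} [AddCommMonoid M]

lemma sum_range_mul_eq_sum_sum (f : ℕ → M) (m n : ℕ) :
    ∑ a ∈ range (m * n), f a = ∑ b ∈ range m, ∑ t ∈ range n, f (b + m * t) := by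
  induction n with
  | zero => simp
  | succ n ih =>
    rw [Nat.mul_succ, sum_range_add, ih]
    simp only [sum_range_succ, sum_add_distrib, add_comm (m * n)]

lemma sum_range_natCast_zmod (n : ℕ) [NeZero n] (g : ZMod n → M) :
    ∑ a ∈ range n, g a = ∑ x, g x :=
  sum_nbij' (fun a ↦ (a : ZMod n)) ZMod.val (fun _ _ ↦ mem_univ _)
    (fun x _ ↦ mem_range.2 x.val_lt) (fun _ ha ↦ ZMod.val_cast_of_lt (mem_range.1 ha))
    (fun x _ ↦ ZMod.natCast_zmod_val x) (fun _ _ ↦ rfl)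

lemma sum_range_mul_natCast_zmod (n k : ℕ) [NeZero n] (g : ZMod n → M) :
    ∑ a ∈ range (n * k), g a = k • ∑ x, g x := by
  simp [sum_range_mul_eq_sum_sum, sum_nsmul, sum_range_natCast_zmod]

end Residues

section RootCount

open Finset Polynomial

/-- The number of roots of `f` modulo `n`, counted among the representatives `0, …, n - 1`. -/
def rootCount (f : ℤ[X]) (n : ℕ) : ℕ :=
  #{a ∈ range n | (n : ℤ) ∣ f.eval (Nat.cast a)}

/-- All roots of `f` modulo `p` are simple: the hypothesis of Hensel's lemma at each of them. -/
def HasSimpleRootsMod (f : ℤ[X]) (p : ℕ) : Prop :=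
  ∀ a : ℤ, (p : ℤ) ∣ f.eval a → ¬ (p : ℤ) ∣ f.derivative.eval a

lemma rootCount_one (f : ℤ[X]) : rootCount f 1 = 1 := by
  simp [rootCount]

lemma rootCount_eq_card_aeval_eq_zero (f : ℤ[X]) (n : ℕ) [NeZero n] :
    rootCount f n = #{x : ZMod n | aeval x f = 0} := by
  have aeval_natCast (a : ℕ) : aeval (a : ZMod n) f = (f.eval (a : ℤ) : ℤ) := by
    simpa using aeval_algebraMap_apply (ZMod n) (a : ℤ) f
  simp only [rootCount, card_filter, ← sum_range_natCast_zmod n, aeval_natCast,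
    ZMod.intCast_zmod_eq_zero_iff_dvd]

lemma dvd_eval_add_mul_iff {R : Type*} [CommRing R] (f : R[X]) (b d t : R) :
    d ∣ f.eval (b + d * t) ↔ d ∣ f.eval b := by
  have h : d ∣ f.eval (b + d * t) - f.eval b :=
    (Dvd.intro t (by ring)).trans (f.sub_dvd_eval_sub (b + d * t) b)
  exact dvd_iff_dvd_of_dvd_sub h

variable {p q : ℕ} [Fact p.Prime] {M : Type*} [AddCommMonoid M] {f : ℤ[X]}

/-- By Taylor expansion at `b`, the quotient is modulo `p` affine in `t`, with invertible slope. -/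
lemma HasSimpleRootsMod.sum_eval_div (hf : HasSimpleRootsMod f p) (hpq : p ∣ q) (hq : q ≠ 0)
    {b : ℤ} (hb : (q : ℤ) ∣ f.eval b) (n : ℕ) (F : ZMod p → M) :
    ∑ t ∈ range (p * n), F (f.eval (b + q * t) / q : ℤ) = n • ∑ x, F x := by
  obtain ⟨c, hc⟩ := hb
  set d : ℤ := f.derivative.eval b
  have hd : (d : ZMod p) ≠ 0 := by
    rw [Ne, ZMod.intCast_zmod_eq_zero_iff_dvd]
    exact hf b (hc ▸ (Int.natCast_dvd_natCast.2 hpq).mul_right c)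
  have hquot (t : ℕ) :
      ((f.eval (b + q * t) / q : ℤ) : ZMod p) = c + d * t := by
    obtain ⟨e, he⟩ := f.binomExpansion b (q * t)
    have hfac : f.eval (b + q * t) = q * (c + d * t + e * q * t ^ 2) := by
      rw [he, hc]; ring
    rw [hfac, Int.mul_ediv_cancel_left _ (by exact_mod_cast hq)]
    simp [(ZMod.natCast_eq_zero_iff q p).2 hpq]
  simp only [hquot]
  rw [sum_range_mul_natCast_zmod p n fun x ↦ F (c + d * x)]
  congr 1
  exact ((Equiv.mulLeft₀ _ hd).trans (Equiv.addLeft (c : ZMod p))).sum_comp F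

lemma HasSimpleRootsMod.sum_range_eval_div (hf : HasSimpleRootsMod f p) (hpq : p ∣ q)
    (hq : q ≠ 0) (n : ℕ) (F : ZMod p → M) :
    ∑ a ∈ range (q * (p * n)),
        (if (q : ℤ) ∣ f.eval (a : ℤ) then F (f.eval (a : ℤ) / q : ℤ) else 0) =
      rootCount f q • n • ∑ x, F x := by
  rw [sum_range_mul_eq_sum_sum, rootCount, ← sum_const, sum_filter]
  refine sum_congr rfl fun b _ ↦ ?_
  push_cast
  simp only [dvd_eval_add_mul_iff]
  split_ifs with hb
  · exact hf.sum_eval_div hpq hq hb n F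
  · exact sum_const_zero

lemma HasSimpleRootsMod.rootCount_mul (hf : HasSimpleRootsMod f p) (hpq : p ∣ q) (hq : q ≠ 0) :
    rootCount f (q * p) = rootCount f q := by
  have hq' : (q : ℤ) ≠ 0 := by exact_mod_cast hq
  have h := hf.sum_range_eval_div hpq hq 1 fun x ↦ if x = 0 then 1 else 0
  simp only [sum_ite_eq', mem_univ, if_true, mul_one, smul_eq_mul] at h
  rw [← h, rootCount, card_filter]
  refine sum_congr rfl fun a _ ↦ ?_
  simp only [← ite_and, ZMod.intCast_zmod_eq_zero_iff_dvd, Nat.cast_mul]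
  refine if_congr ⟨fun ⟨c, hc⟩ ↦ ?_, fun ⟨hqa, hpa⟩ ↦ ?_⟩ rfl rfl
  · rw [hc, mul_assoc, Int.mul_ediv_cancel_left _ hq']
    exact ⟨dvd_mul_right _ _, dvd_mul_right _ _⟩
  · exact Int.mul_dvd_of_dvd_div hqa hpa

lemma HasSimpleRootsMod.rootCount_pow (hf : HasSimpleRootsMod f p) {k : ℕ} (hk : k ≠ 0) :
    rootCount f (p ^ k) = rootCount f p := by
  induction k with
  | zero => contradiction
  | succ k ih =>
    rcases eq_or_ne k 0 with rfl | hk0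
    · rw [zero_add, pow_one]
    · rw [pow_succ, hf.rootCount_mul (dvd_pow_self p hk0) (pow_ne_zero k NeZero.out), ih hk0]

end RootCount

open Finset in
lemma sum_ite_zero_one {ι : Type*} [Fintype ι] (P : ι → Prop) [DecidablePred P] :
    ∑ i, (if P i then (0 : ℤ) else 1) = Fintype.card ι - #{i | P i} := by
  rw [eq_sub_iff_add_eq', ← card_univ, ← card_filter_add_card_filter_not (s := univ) P]
  simp [sum_ite]

section QuadraticChar

open Finset

variable {F : Type*} [Field F] [Fintype F] [DecidableEq F]

local notation "χ" => quadraticChar F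

lemma quadraticChar_pow_of_even {n : ℕ} (hn : n ≠ 0) (he : Even n) (x : F) :
    χ x ^ n = if x = 0 then 0 else 1 := by
  rw [← MulChar.pow_apply' _ hn, (quadraticChar_isQuadratic F).pow_even he]
  split_ifs with hx
  · rw [hx, MulChar.map_zero]
  · exact MulChar.one_apply (Ne.isUnit hx)

lemma quadraticChar_pow_of_odd {n : ℕ} (ho : Odd n) (x : F) : χ x ^ n = χ x := by
  rw [← MulChar.pow_apply' _ ho.pos.ne', (quadraticChar_isQuadratic F).pow_odd ho]

lemma sum_quadraticChar_mul_quadraticChar_sub (hF : ringChar F ≠ 2) {D : F} (hD : D ≠ 0) :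
    ∑ y, χ y * χ (y - D) = -1 := by
  have hJ : ∑ z, χ z * χ (1 - z) = -χ (-1) := by
    simpa only [(quadraticChar_isQuadratic F).inv, jacobiSum] using
      jacobiSum_nontrivial_inv (quadraticChar_ne_one hF)
  have hscale (z : F) : χ (D * z) * χ (D * z - D) = χ (-1) * (χ z * χ (1 - z)) := by
    rw [show D * z - D = D * (-1 * (1 - z)) by ring]
    simp only [map_mul]
    linear_combination (χ z * χ (-1) * χ (1 - z)) * quadraticChar_sq_one hD
  rw [← Equiv.sum_comp (Equiv.mulLeft₀ D hD) fun y ↦ χ y * χ (y - D)]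
  simp only [Equiv.mulLeft₀_apply, hscale, ← mul_sum, hJ]
  linear_combination -quadraticChar_sq_one (neg_ne_zero.2 (one_ne_zero (α := F)))

lemma sum_comp_sq (hF : ringChar F ≠ 2) (g : F → ℤ) :
    ∑ x, g (x ^ 2) = ∑ y, (χ y + 1) * g y := by
  rw [← sum_fiberwise univ fun x : F ↦ x ^ 2]
  refine sum_congr rfl fun y _ ↦ ?_
  have hcard : (#{x : F | x ^ 2 = y} : ℤ) = χ y + 1 := by
    rw [← quadraticChar_card_sqrts hF y, Set.toFinset_ofPred]
  rw [← hcard, ← nsmul_eq_mul, ← sum_const]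
  exact sum_congr rfl fun x hx ↦ by rw [(mem_filter.1 hx).2]

lemma sum_quadraticChar_sq_sub (hF : ringChar F ≠ 2) {D : F} (hD : D ≠ 0) :
    ∑ x, χ (x ^ 2 - D) = -1 := by
  have hshift : ∑ y, χ (y - D) = 0 :=
    ((Equiv.subRight D).sum_comp χ).trans (quadraticChar_sum_zero hF)
  simp only [sum_comp_sq hF fun y ↦ χ (y - D), add_mul, one_mul, sum_add_distrib, hshift,
    sum_quadraticChar_mul_quadraticChar_sub hF hD, add_zero]

lemma sum_quadraticChar_pow (hF : ringChar F ≠ 2) {n : ℕ} (hn : n ≠ 0) :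
    ∑ x, χ x ^ n = if Even n then (Fintype.card F : ℤ) - 1 else 0 := by
  split_ifs with h
  · simp only [quadraticChar_pow_of_even hn h]
    simpa [filter_eq'] using sum_ite_zero_one fun x : F ↦ x = 0
  · simp only [quadraticChar_pow_of_odd (Nat.not_even_iff_odd.1 h), quadraticChar_sum_zero hF]

lemma sum_quadraticChar_sq_sub_pow (hF : ringChar F ≠ 2) {D : F} (hD : D ≠ 0) {n : ℕ}
    (hn : n ≠ 0) :
    ∑ x, χ (x ^ 2 - D) ^ n =
      if Even n then (Fintype.card F : ℤ) - #{x : F | x ^ 2 - D = 0} else -1 := by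
  split_ifs with h
  · simp only [quadraticChar_pow_of_even hn h]
    exact sum_ite_zero_one _
  · simp only [quadraticChar_pow_of_odd (Nat.not_even_iff_odd.1 h), sum_quadraticChar_sq_sub hF hD]

end QuadraticChar

lemma jacobiSym_prime_pow (p : ℕ) [Fact p.Prime] (u : ℕ) (a : ℤ) :
    jacobiSym a (p ^ u) = quadraticChar (ZMod p) a ^ u := by
  rw [jacobiSym.pow_right, ← jacobiSym.legendreSym.to_jacobiSym, legendreSym]

section Klp

open Finset Polynomial

/-- The polynomial `a² - 4m` in `a`, whose values enter `Klp`. -/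
noncomputable def klPoly (m : ℤ) : ℤ[X] := X ^ 2 - C (4 * m)

@[simp]
lemma eval_klPoly (m a : ℤ) : (klPoly m).eval a = a ^ 2 - 4 * m := by
  simp [klPoly]

@[simp]
lemma aeval_klPoly {R : Type*} [CommRing R] (m : ℤ) (x : R) :
    aeval x (klPoly m) = x ^ 2 - 4 * (m : R) := by
  simp [klPoly, -map_mul, -eq_intCast, aeval_C]

lemma Klp_zero_left (p v : ℕ) (m : ℤ) : Klp p 0 v m = rootCount (klPoly m) (p ^ (2 * v)) := by
  simp [Klp, rootCount]

variable {p : ℕ} [Fact p.Prime] {m : ℤ}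

lemma four_mul_intCast_ne_zero (hp2 : p ≠ 2) (hm : ¬ (p : ℤ) ∣ m) : (4 * m : ZMod p) ≠ 0 := by
  have h2 : (2 : ZMod p) ≠ 0 := Ring.two_ne_zero (by rwa [ZMod.ringChar_zmod_n])
  rw [show (4 : ZMod p) = 2 * 2 by norm_num]
  exact mul_ne_zero (mul_ne_zero h2 h2) (by rwa [Ne, ZMod.intCast_zmod_eq_zero_iff_dvd])

lemma hasSimpleRootsMod_klPoly (hp2 : p ≠ 2) (hm : ¬ (p : ℤ) ∣ m) :
    HasSimpleRootsMod (klPoly m) p := by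
  intro a hroot hderiv
  have h2 : (2 : ZMod p) ≠ 0 := Ring.two_ne_zero (by rwa [ZMod.ringChar_zmod_n])
  rw [← ZMod.intCast_zmod_eq_zero_iff_dvd] at hroot hderiv
  have ha : (a : ZMod p) = 0 := by simpa [klPoly, h2] using hderiv
  exact four_mul_intCast_ne_zero hp2 hm (by simpa [ha] using hroot)

lemma Klp_succ_zero (hp2 : p ≠ 2) (hm : ¬ (p : ℤ) ∣ m) (u : ℕ) :
    Klp p (u + 1) 0 m =
      p ^ u * if Even (u + 1) then (p : ℤ) - rootCount (klPoly m) p else -1 := by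
  have hchar : ringChar (ZMod p) ≠ 2 := by rwa [ZMod.ringChar_zmod_n]
  have hsum := sum_quadraticChar_sq_sub_pow hchar (four_mul_intCast_ne_zero hp2 hm) u.succ_ne_zero
  rw [ZMod.card] at hsum
  simp only [rootCount_eq_card_aeval_eq_zero, aeval_klPoly]
  rw [← hsum]
  simp only [Klp, jacobiSym_prime_pow, mul_zero, pow_zero, one_dvd, if_true, add_zero,
    Int.ediv_one]
  push_cast
  rw [pow_succ' p,
    sum_range_mul_natCast_zmod p _ fun x ↦ quadraticChar (ZMod p) (x ^ 2 - 4 * m) ^ (u + 1)]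
  simp

lemma Klp_succ_succ (hp2 : p ≠ 2) (hm : ¬ (p : ℤ) ∣ m) (u v : ℕ) :
    Klp p (u + 1) (v + 1) m =
      rootCount (klPoly m) p * (p ^ u * if Even (u + 1) then (p : ℤ) - 1 else 0) := by
  have hchar : ringChar (ZMod p) ≠ 2 := by rwa [ZMod.ringChar_zmod_n]
  have hf := hasSimpleRootsMod_klPoly hp2 hm
  have hv : 2 * (v + 1) ≠ 0 := by positivity
  have hsum := hf.sum_range_eval_div (dvd_pow_self p hv) (pow_ne_zero _ NeZero.out) (p ^ u)
    fun x ↦ quadraticChar (ZMod p) x ^ (u + 1)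
  rw [sum_quadraticChar_pow hchar u.succ_ne_zero, hf.rootCount_pow hv, ZMod.card, ← pow_succ',
    ← pow_add, add_comm] at hsum
  simpa [Klp, jacobiSym_prime_pow] using hsum

lemma Klp_zero_succ (hp2 : p ≠ 2) (hm : ¬ (p : ℤ) ∣ m) (v : ℕ) :
    Klp p 0 (v + 1) m = rootCount (klPoly m) p := by
  rw [Klp_zero_left, (hasSimpleRootsMod_klPoly hp2 hm).rootCount_pow (by positivity)]

lemma Klp_add_one_right (hp2 : p ≠ 2) (hm : ¬ (p : ℤ) ∣ m) (u v : ℕ) :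
    Klp p u (v + 1) m = Klp p u 1 m := by
  cases u with
  | zero => rw [Klp_zero_succ hp2 hm, Klp_zero_succ hp2 hm 0]
  | succ u => rw [Klp_succ_succ hp2 hm, Klp_succ_succ hp2 hm u 0]

end Klp

section Series

lemma norm_sq_lt_one {R : Type*} [NormedDivisionRing R] {x : R} (hx : ‖x‖ < 1) : ‖x ^ 2‖ < 1 := by
  simpa only [norm_pow] using pow_lt_one₀ (norm_nonneg x) hx two_ne_zero

variable {𝕜 : Type*}

lemma hasSum_ite_even_mul_pow [NormedField 𝕜] [CompleteSpace 𝕜] (α β : 𝕜) {x : 𝕜}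
    (hx : ‖x‖ < 1) :
    HasSum (fun n : ℕ ↦ (if Even n then α else β) * x ^ n) ((α + β * x) / (1 - x ^ 2)) := by
  have hgeom := hasSum_geometric_of_norm_lt_one (norm_sq_lt_one hx)
  have heven : HasSum (fun k : ℕ ↦ (if Even (2 * k) then α else β) * x ^ (2 * k))
      (α * (1 - x ^ 2)⁻¹) := by
    simpa [pow_mul] using hgeom.mul_left α
  have hodd : HasSum (fun k : ℕ ↦ (if Even (2 * k + 1) then α else β) * x ^ (2 * k + 1))
      (β * x * (1 - x ^ 2)⁻¹) := by
    simpa [pow_succ', pow_mul, mul_assoc] using hgeom.mul_left (β * x)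
  rw [add_div, div_eq_mul_inv α, div_eq_mul_inv (β * x)]
  exact HasSum.even_add_odd (f := fun n ↦ (if Even n then α else β) * x ^ n) heven hodd

lemma hasSum_of_succ_eq_ite_even [NormedField 𝕜] [CompleteSpace 𝕜] {f : ℕ → 𝕜} (α β : 𝕜)
    {x y : 𝕜} (hy : ‖y‖ < 1)
    (hsucc : ∀ u, f (u + 1) = x * ((if Even u then α else β) * y ^ u)) :
    HasSum f ((f 0 * (1 - y ^ 2) + x * (α + β * y)) / (1 - y ^ 2)) := by
  have hy2 : 1 - y ^ 2 ≠ 0 := (isUnit_one_sub_of_norm_lt_one (norm_sq_lt_one hy)).ne_zero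
  rw [add_div, mul_div_cancel_right₀ _ hy2, mul_div_assoc, add_comm, ← hasSum_nat_add_iff' 1]
  simpa only [hsucc, Finset.sum_range_one, add_sub_cancel_right] using
    (hasSum_ite_even_mul_pow α β hy).mul_left x

variable [RCLike 𝕜]

lemma hasSum_prod_mul {ι κ : Type*} {f : ι → 𝕜} {g : κ → 𝕜} {a b : 𝕜} (hf : HasSum f a)
    (hg : HasSum g b) :
    HasSum (fun ij : ι × κ ↦ f ij.1 * g ij.2) (a * b) :=
  hf.mul hg (summable_mul_of_summable_norm hf.summable.norm hg.summable.norm)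

lemma hasSum_prod_of_succ_eq_mul_pow {ι : Type*} {f : ι × ℕ → 𝕜} {g : ι → 𝕜} {a b y : 𝕜}
    (hzero : HasSum (fun u ↦ f (u, 0)) a) (hg : HasSum g b) (hy : ‖y‖ < 1)
    (hsucc : ∀ u v, f (u, v + 1) = g u * y ^ (v + 1)) :
    HasSum f (a + b * (y / (1 - y))) := by
  -- The pattern `g u * y ^ v` of `hsucc` is summed from `v = 0` on, and corrected there.
  have hcorr := hasSum_prod_mul (hzero.sub hg) (hasSum_ite_eq (0 : ℕ) (1 : 𝕜))
  have hval : a + b * (y / (1 - y)) = b * (1 - y)⁻¹ + (a - b) * 1 := by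
    have hy1 : 1 - y ≠ 0 := (isUnit_one_sub_of_norm_lt_one hy).ne_zero
    field_simp
    ring
  rw [hval]
  refine ((hasSum_prod_mul hg (hasSum_geometric_of_norm_lt_one hy)).add hcorr).congr_fun ?_
  rintro ⟨u, v⟩
  cases v <;> simp [hsucc]

end Series

section KlpSeries

variable {𝕜 : Type*} [RCLike 𝕜] {p : ℕ} [Fact p.Prime] {m : ℤ} {x : 𝕜}

lemma hasSum_Klp_zero_right (hp2 : p ≠ 2) (hm : ¬ (p : ℤ) ∣ m) (hx : ‖(p : 𝕜) * x‖ < 1) :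
    HasSum (fun u ↦ (Klp p u 0 m : 𝕜) * x ^ u)
      ((1 - x - rootCount (klPoly m) p * p * x ^ 2) / (1 - (p * x) ^ 2)) := by
  have h := hasSum_of_succ_eq_ite_even (f := fun u ↦ (Klp p u 0 m : 𝕜) * x ^ u) (x := x)
    (-1) (p - rootCount (klPoly m) p) hx fun u ↦ by
      simp only [Klp_succ_zero hp2 hm, Nat.even_add_one, ite_not]
      push_cast
      ring
  convert h using 2
  simp only [Klp_zero_left, mul_zero, pow_zero, rootCount_one, Nat.cast_one, Int.cast_one]
  ring

lemma hasSum_Klp_one_right (hp2 : p ≠ 2) (hm : ¬ (p : ℤ) ∣ m) (hx : ‖(p : 𝕜) * x‖ < 1) :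
    HasSum (fun u ↦ (Klp p u 1 m : 𝕜) * x ^ u)
      (rootCount (klPoly m) p * (1 - p * x ^ 2) / (1 - (p * x) ^ 2)) := by
  have h := hasSum_of_succ_eq_ite_even (f := fun u ↦ (Klp p u 1 m : 𝕜) * x ^ u) (x := x)
    0 (rootCount (klPoly m) p * (p - 1)) hx fun u ↦ by
      simp only [Klp_succ_succ hp2 hm u 0, Nat.even_add_one, ite_not]
      split_ifs <;> push_cast <;> ring
  convert h using 2
  simp only [Klp_zero_succ hp2 hm 0, pow_zero, Int.cast_natCast]
  ring

theorem hasSum_Klp (hp2 : p ≠ 2) (hm : ¬ (p : ℤ) ∣ m) {y : 𝕜} (hx : ‖(p : 𝕜) * x‖ < 1)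
    (hy : ‖y‖ < 1) :
    HasSum (fun uv : ℕ × ℕ ↦ (Klp p uv.1 uv.2 m : 𝕜) * x ^ uv.1 * y ^ uv.2)
      ((1 - x) / (1 - (p * x) ^ 2) +
        rootCount (klPoly m) p * (y - p * x ^ 2) / ((1 - (p * x) ^ 2) * (1 - y))) := by
  have hy1 : 1 - y ≠ 0 := (isUnit_one_sub_of_norm_lt_one hy).ne_zero
  convert hasSum_prod_of_succ_eq_mul_pow
    (f := fun uv ↦ (Klp p uv.1 uv.2 m : 𝕜) * x ^ uv.1 * y ^ uv.2)
    (by simpa using hasSum_Klp_zero_right hp2 hm hx) (hasSum_Klp_one_right hp2 hm hx) hy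
    (fun u v ↦ by rw [Klp_add_one_right hp2 hm]) using 1
  field_simp
  ring

end KlpSeries

section Complex

open Complex

lemma norm_natCast_cpow_neg_lt_one {n : ℕ} (hn : 1 < n) {w : ℂ} (hw : 0 < w.re) :
    ‖(n : ℂ) ^ (-w)‖ < 1 := by
  rw [norm_natCast_cpow_of_pos (zero_lt_one.trans hn)]
  exact Real.rpow_lt_one_of_one_lt_of_neg (by exact_mod_cast hn) (by simpa using hw)

lemma cpow_neg_natCast_mul (z w : ℂ) (n : ℕ) : z ^ (-(n : ℂ) * w) = (z ^ (-w)) ^ n := by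
  rw [neg_mul_comm, cpow_nat_mul]

lemma mul_cpow_neg_add_one {z : ℂ} (hz : z ≠ 0) (w : ℂ) : z * z ^ (-(w + 1)) = z ^ (-w) := by
  rw [neg_add, cpow_add _ _ hz, cpow_neg_one, mul_comm, mul_assoc, inv_mul_cancel₀ hz, mul_one]

end Complex

theorem stmt4 (p : ℕ) (hp : p.Prime) (hp2 : p ≠ 2) (m : ℤ) (hm : ¬ (p:ℤ) ∣ m)
    (s : ℂ) (hs : 0 < s.re) :
    Summable (fun uv : ℕ × ℕ =>
      ‖(Klp p uv.1 uv.2 m : ℂ) * (p:ℂ) ^ (-(uv.1:ℂ) * (s+1)) * (p:ℂ) ^ (-(uv.2:ℂ) * (2*s+1))‖) ∧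
    ∑' uv : ℕ × ℕ,
        (Klp p uv.1 uv.2 m : ℂ) * (p:ℂ) ^ (-(uv.1:ℂ) * (s+1)) * (p:ℂ) ^ (-(uv.2:ℂ) * (2*s+1))
      = (1 - (p:ℂ) ^ (-(s+1))) / (1 - (p:ℂ) ^ (-(2*s))) := by
  have : Fact p.Prime := ⟨hp⟩
  have hp0 : (p : ℂ) ≠ 0 := by exact_mod_cast hp.ne_zero
  set x : ℂ := (p : ℂ) ^ (-(s + 1))
  have hpx : (p : ℂ) * x = (p : ℂ) ^ (-s) := mul_cpow_neg_add_one hp0 s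
  have hpx_sq : (p : ℂ) ^ (-(2 * s)) = (p * x) ^ 2 := by
    rw [hpx, ← cpow_neg_natCast_mul, neg_mul, Nat.cast_ofNat]
  have hy : (p : ℂ) ^ (-(2 * s + 1)) = p * x ^ 2 := by
    apply mul_left_cancel₀ hp0
    rw [mul_cpow_neg_add_one hp0, hpx_sq]
    ring
  have hx_norm : ‖(p : ℂ) * x‖ < 1 := hpx ▸ norm_natCast_cpow_neg_lt_one hp.one_lt hs
  have hy_norm : ‖(p : ℂ) * x ^ 2‖ < 1 :=
    hy ▸ norm_natCast_cpow_neg_lt_one hp.one_lt (by simpa using by positivity)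
  have hsum := hasSum_Klp hp2 hm hx_norm hy_norm
  rw [sub_self, mul_zero, zero_div, add_zero] at hsum
  simp only [cpow_neg_natCast_mul, hy, hpx_sq]
  exact ⟨hsum.summable.norm, hsum.tsum_eq⟩
end

section
/- Let p be an odd prime, let m ∈ ℤ be nonzero with p ∣ m, and let s ∈ ℂ with Re s > 0. Then the double series Σ_{u≥0} Σ_{v≥0} Kl_p(u,v;m) · p^{−u(s+1)} · p^{−v(2s+1)} converges absolutely, and its sum equals ((1 − p^{−(s+1)})/(1 − p^{−2s})) · ((1 − p^{−s(v_p(m)+1)})/(1 − p^{−s})), where v_p(m) is the p-adic valuation of m. -/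
/-!
Sorting the `a` with `p ^ (2 * v) ∣ a ^ 2 - 4 * m` by the residue `y` modulo `p` of the quotient
expresses `Kl_p(u, v; m)` through the number `N_v(y)` of square roots of `4 * m + p ^ (2 * v) * y`
modulo `p ^ (2 * v + 1)`: with `χ` the quadratic character,
`p * Kl_p(u, v; m) = p ^ u * ∑ y, N_v(y) * χ(y) ^ u`. For `X = p ^ (-s)` the sum over `u` is then a
geometric series, and what remains is `∑ y, W(y) / (1 - X * χ(y))` with
`W(y) = ∑ v, N_v(y) * (X ^ 2 / p) ^ v`. Lifting square roots gives `W` when `p ^ 2 ∤ m`, and passing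
from `m` to `p ^ 2 * m` replaces `W(y)` by `1 + χ(y) + X ^ 2 * W(y)`. The claim follows by induction
on the valuation of `m`, where the case `p ∤ m` uses `∑ y, χ(c + y) * χ(y) = -1` for `c ≠ 0`.
-/

open Finset

section QuadraticChar

variable {F : Type*} [Field F] [Fintype F] [DecidableEq F]

theorem sum_quadraticChar_add_mul_quadraticChar (hF : ringChar F ≠ 2) {c : F} (hc : c ≠ 0) :
    ∑ y : F, quadraticChar F (c + y) * quadraticChar F y = -1 := by
  have hinv : (quadraticChar F)⁻¹ = quadraticChar F := (quadraticChar_isQuadratic F).inv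
  have hjacobi := jacobiSum_nontrivial_inv (quadraticChar_ne_one hF)
  rw [hinv] at hjacobi
  calc ∑ y : F, quadraticChar F (c + y) * quadraticChar F y
      = ∑ x : F, quadraticChar F (-1) * (quadraticChar F x * quadraticChar F (1 - x)) := by
        refine (Fintype.sum_equiv (Equiv.mulLeft₀ (-c) (neg_ne_zero.2 hc)) _ _ fun x => ?_).symm
        have hleft : c + -c * x = c * (1 - x) := by ring
        have hright : -c * x = -1 * (c * x) := by ring
        simp only [Equiv.mulLeft₀_apply]
        rw [hleft, hright]
        simp only [map_mul]
        linear_combination (-quadraticChar F (-1) * quadraticChar F x * quadraticChar F (1 - x)) *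
          quadraticChar_sq_one hc
    _ = quadraticChar F (-1) * jacobiSum (quadraticChar F) (quadraticChar F) :=
        (mul_sum ..).symm
    _ = -1 := by
        linear_combination quadraticChar F (-1) * hjacobi -
          quadraticChar_sq_one (neg_ne_zero.2 (one_ne_zero (α := F)))

theorem sum_quadraticChar_sq :
    ∑ y : F, quadraticChar F y ^ 2 = Fintype.card F - 1 := by
  rw [sum_eq_sum_sdiff_singleton_add (mem_univ 0)]
  rw [sum_congr rfl fun y hy => quadraticChar_sq_one (by simpa using hy)]
  simp [card_sdiff, Nat.cast_sub Fintype.card_pos]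

theorem sum_quadraticChar_add_left (hF : ringChar F ≠ 2) (c : F) :
    ∑ y : F, quadraticChar F (c + y) = 0 :=
  (Equiv.sum_comp (Equiv.addLeft c) (quadraticChar F)).trans (quadraticChar_sum_zero hF)

theorem sum_mul_inv_one_sub_mul_quadraticChar {K : Type*} [Field K] {X : K} (hX : 1 - X ^ 2 ≠ 0)
    (G : F → K) :
    ∑ y : F, G y * (1 - X * quadraticChar F y)⁻¹ =
      (∑ y : F, G y + X * ∑ y : F, G y * quadraticChar F y - X ^ 2 * G 0) / (1 - X ^ 2) := by
  have hterm (y : F) : G y * (1 - X * quadraticChar F y)⁻¹ =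
      (G y + X * (G y * quadraticChar F y) - if y = 0 then X ^ 2 * G 0 else 0) / (1 - X ^ 2) := by
    rcases eq_or_ne y 0 with rfl | hy
    · rw [if_pos rfl, MulChar.map_zero]
      field_simp
      push_cast
      ring
    · have hsq : (quadraticChar F y : K) ^ 2 = 1 := by
        exact_mod_cast congrArg (Int.cast : ℤ → K) (quadraticChar_sq_one hy)
      have hprod : (1 - X * quadraticChar F y) * (1 + X * quadraticChar F y) = 1 - X ^ 2 := by
        linear_combination -X ^ 2 * hsq
      have hne : 1 - X * quadraticChar F y ≠ 0 := left_ne_zero_of_mul (hprod ▸ hX)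
      rw [if_neg hy, sub_zero, eq_div_iff hX, ← hprod]
      field_simp
  simp only [hterm, ← sum_div, sum_sub_distrib, sum_add_distrib, ← mul_sum, sum_ite_eq', mem_univ,
    if_true]

theorem sum_one_add_quadraticChar_add_mul_inv (hF : ringChar F ≠ 2) {K : Type*} [Field K] {X : K}
    (hX : 1 - X ^ 2 ≠ 0) {c : F} (hc : c ≠ 0) (w : K) :
    ∑ y : F, (1 + quadraticChar F (c + y) + w) * (1 - X * quadraticChar F y)⁻¹ =
      (Fintype.card F * (1 + w) - X - X ^ 2 * (1 + quadraticChar F c + w)) / (1 - X ^ 2) := by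
  have hsum : ∑ y : F, (quadraticChar F y : K) = 0 := by
    exact_mod_cast congrArg (Int.cast : ℤ → K) (quadraticChar_sum_zero hF)
  have hshift : ∑ y : F, (quadraticChar F (c + y) : K) = 0 := by
    exact_mod_cast congrArg (Int.cast : ℤ → K) (sum_quadraticChar_add_left hF c)
  have hcorr : ∑ y : F, (quadraticChar F (c + y) : K) * quadraticChar F y = -1 := by
    exact_mod_cast congrArg (Int.cast : ℤ → K) (sum_quadraticChar_add_mul_quadraticChar hF hc)
  rw [sum_mul_inv_one_sub_mul_quadraticChar hX]
  simp only [add_mul, one_mul, sum_add_distrib, ← mul_sum, hsum, hshift, hcorr, sum_const,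
    card_univ, nsmul_eq_mul, add_zero]
  ring

theorem sum_one_add_quadraticChar_mul_inv (hF : ringChar F ≠ 2) {K : Type*} [Field K] {X : K}
    (hX : 1 - X ^ 2 ≠ 0) :
    ∑ y : F, (1 + quadraticChar F y) * (1 - X * quadraticChar F y)⁻¹ =
      (Fintype.card F - X) / (1 - X) := by
  have hfactor : (1 - X) * (1 + X) ≠ 0 := by convert hX using 1; ring
  have hsum : ∑ y : F, (quadraticChar F y : K) = 0 := by
    exact_mod_cast congrArg (Int.cast : ℤ → K) (quadraticChar_sum_zero hF)
  have hsq : ∑ y : F, (quadraticChar F y : K) * quadraticChar F y = Fintype.card F - 1 := by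
    simpa [sq] using congrArg (Int.cast : ℤ → K) (sum_quadraticChar_sq (F := F))
  rw [sum_mul_inv_one_sub_mul_quadraticChar hX, div_eq_div_iff hX (left_ne_zero_of_mul hfactor)]
  simp only [add_mul, one_mul, sum_add_distrib, hsum, hsq, sum_const, card_univ, nsmul_eq_mul,
    MulChar.map_zero, Int.cast_zero]
  ring

end QuadraticChar

theorem count_mul_of_periodic {P : ℕ → Prop} [DecidablePred P] {n : ℕ}
    (hP : Function.Periodic P n) (k : ℕ) : Nat.count P (n * k) = k * Nat.count P n := by
  induction k with
  | zero => simp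
  | succ k ih =>
    have hshift : (fun i => P (n * k + i)) = P := by
      funext i
      simpa [add_comm, mul_comm] using hP.nat_mul k i
    simp only [Nat.mul_succ, Nat.count_add, hshift, ih, Nat.succ_mul]

theorem hasSum_mul_pow_of_succ {R : Type*} [Semiring R] [TopologicalSpace R] [ContinuousAdd R]
    {c : ℕ → R} {z a : R} (h : HasSum (fun v => c (v + 1) * z ^ (v + 1)) a) :
    HasSum (fun v => c v * z ^ v) (c 0 + a) := by
  simpa only [pow_zero, mul_one] using HasSum.zero_add (f := fun v => c v * z ^ v) h

theorem hasSum_pow_mul {K : Type*} [NormedField K] [CompleteSpace K] {x a : K} {f : ℕ → K}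
    (hx : ‖x‖ < 1) (hf : HasSum f a) (hfnorm : Summable fun v => ‖f v‖) :
    HasSum (fun uv : ℕ × ℕ => x ^ uv.1 * f uv.2) ((1 - x)⁻¹ * a) :=
  (hasSum_geometric_of_norm_lt_one hx).mul hf
    (summable_mul_of_summable_norm (summable_norm_geometric_of_norm_lt_one hx) hfnorm)

theorem exists_eq_pow_padicValInt_mul {p : ℕ} (hp : p.Prime) {m : ℤ} (hm : m ≠ 0) :
    ∃ n : ℤ, ¬ (p : ℤ) ∣ n ∧ m = (p : ℤ) ^ padicValInt p m * n := by
  have : Fact p.Prime := ⟨hp⟩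
  obtain ⟨n, hn⟩ := padicValInt_dvd (p := p) m
  refine ⟨n, fun hpn => ?_, hn⟩
  have hdvd : (p : ℤ) ^ (padicValInt p m + 1) ∣ m := by
    nth_rw 2 [hn]
    exact mul_dvd_mul_left _ hpn
  exact (padicValInt_dvd_iff _ _).1 hdvd |>.elim hm (Nat.not_succ_le_self _)

/-- The number of square roots of `d` modulo `n`, counted among the representatives
`0, ..., n - 1`; it is the local count to which the sums `Klp` are reduced. -/
def sqrtCount (n : ℕ) (d : ℤ) : ℕ :=
  Nat.count (fun a : ℕ => (a : ℤ) ^ 2 ≡ d [ZMOD n]) n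

theorem card_range_mul_filter_sq_modEq (n k : ℕ) (d : ℤ) :
    #{a ∈ range (n * k) | ((a : ℕ) : ℤ) ^ 2 ≡ d [ZMOD n]} = k * sqrtCount n d := by
  rw [← Nat.count_eq_card_filter_range, count_mul_of_periodic, sqrtCount]
  intro a
  have hshift : ((a + n : ℕ) : ℤ) ≡ a [ZMOD n] := by simp
  exact propext ⟨(hshift.pow 2).symm.trans, (hshift.pow 2).trans⟩

theorem card_range_filter_sq_modEq (n : ℕ) (d : ℤ) :
    #{a ∈ range n | ((a : ℕ) : ℤ) ^ 2 ≡ d [ZMOD n]} = sqrtCount n d :=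
  (Nat.count_eq_card_filter_range ..).symm

theorem sqrtCount_congr {n : ℕ} {d e : ℤ} (h : d ≡ e [ZMOD n]) : sqrtCount n d = sqrtCount n e := by
  unfold sqrtCount
  congr 1
  funext a
  exact propext ⟨fun ha => ha.trans h, fun ha => ha.trans h.symm⟩

theorem sqrtCount_eq_card_zmod (n : ℕ) [NeZero n] (d : ℤ) :
    sqrtCount n d = #{x : ZMod n | x ^ 2 = d} := by
  rw [← card_range_filter_sq_modEq]
  refine card_nbij' (fun a => (a : ZMod n)) ZMod.val ?_ ?_ ?_ ?_
  · intro a ha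
    simp only [coe_filter, mem_range, Set.mem_ofPred_eq, ← ZMod.intCast_eq_intCast_iff] at ha
    simpa using ha.2
  · intro x hx
    simpa [← ZMod.intCast_eq_intCast_iff, ZMod.val_lt] using hx
  · intro a ha
    simp only [coe_filter, mem_range, Set.mem_ofPred_eq] at ha
    exact ZMod.val_cast_of_lt ha.1
  · intro x _
    exact ZMod.natCast_zmod_val x

theorem sqrtCount_mul_sq {n : ℕ} [NeZero n] {e : ℤ} (he : IsCoprime e n) (d : ℤ) :
    sqrtCount n (e ^ 2 * d) = sqrtCount n d := by
  have hunit : IsUnit (e : ZMod n) := (ZMod.coe_int_isUnit_iff_isCoprime e n).2 he.symm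
  simp only [sqrtCount_eq_card_zmod]
  symm
  refine card_equiv hunit.unit.mulLeft fun x => ?_
  simp [mul_pow, (hunit.pow 2).mul_right_inj]

section Fiber

variable {p : ℕ} [NeZero p]

theorem modEq_add_pow_mul_val_iff (k : ℕ) (x d : ℤ) (y : ZMod p) :
    x ≡ d + (p : ℤ) ^ k * y.val [ZMOD (p : ℤ) ^ (k + 1)] ↔
      (p : ℤ) ^ k ∣ x - d ∧ (((x - d) / (p : ℤ) ^ k : ℤ) : ZMod p) = y := by
  have hp : (p : ℤ) ^ k ≠ 0 := pow_ne_zero k (NeZero.ne _)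
  have hquot (q : ℤ) (hq : x - d = (p : ℤ) ^ k * q) :
      x ≡ d + (p : ℤ) ^ k * y.val [ZMOD (p : ℤ) ^ (k + 1)] ↔ (q : ZMod p) = y := by
    have hdiff : d + (p : ℤ) ^ k * y.val - x = (p : ℤ) ^ k * (y.val - q) := by
      linear_combination -hq
    rw [Int.modEq_iff_dvd, hdiff, pow_succ, mul_dvd_mul_iff_left hp,
      ← ZMod.intCast_eq_intCast_iff_dvd_sub]
    simp
  constructor
  · intro h
    have hdvd : (p : ℤ) ^ k ∣ x - d :=
      (Int.modEq_add_modulus_mul_iff.1 (h.of_dvd (pow_dvd_pow _ k.le_succ))).symm.dvd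
    exact ⟨hdvd, (hquot _ (Int.mul_ediv_cancel' hdvd).symm).1 h⟩
  · rintro ⟨hdvd, h⟩
    exact (hquot _ (Int.mul_ediv_cancel' hdvd).symm).2 h

theorem sum_range_ite_dvd_sq_sub {R : Type*} [CommSemiring R] (k b : ℕ) (d : ℤ) (f : ZMod p → R) :
    ∑ a ∈ range (p ^ (k + 1) * b), (if (p : ℤ) ^ k ∣ (a : ℤ) ^ 2 - d then
        f ((((a : ℤ) ^ 2 - d) / (p : ℤ) ^ k : ℤ) : ZMod p) else 0) =
      b * ∑ y : ZMod p, sqrtCount (p ^ (k + 1)) (d + (p : ℤ) ^ k * y.val) * f y := by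
  have hterm (a : ℕ) : (if (p : ℤ) ^ k ∣ (a : ℤ) ^ 2 - d then
      f ((((a : ℤ) ^ 2 - d) / (p : ℤ) ^ k : ℤ) : ZMod p) else 0) =
      ∑ y : ZMod p,
        if (a : ℤ) ^ 2 ≡ d + (p : ℤ) ^ k * y.val [ZMOD (p ^ (k + 1) : ℕ)] then f y else 0 := by
    simp only [Nat.cast_pow, modEq_add_pow_mul_val_iff, ite_and, sum_ite_irrel, sum_ite_eq,
      mem_univ, if_true, sum_const_zero]
  simp_rw [hterm, mul_sum]
  rw [sum_comm]
  refine sum_congr rfl fun y _ => ?_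
  rw [← sum_filter, sum_const, card_range_mul_filter_sq_modEq, nsmul_eq_mul]
  push_cast
  ring

theorem sum_sqrtCount_add_pow_mul (k : ℕ) (d : ℤ) :
    ∑ y : ZMod p, sqrtCount (p ^ (k + 1)) (d + (p : ℤ) ^ k * y.val) = p * sqrtCount (p ^ k) d := by
  have h := sum_range_ite_dvd_sq_sub k 1 d (fun _ : ZMod p => 1)
  have hiff (a : ℕ) : (p : ℤ) ^ k ∣ (a : ℤ) ^ 2 - d ↔ (a : ℤ) ^ 2 ≡ d [ZMOD (p ^ k : ℕ)] := by
    rw [Int.modEq_comm, Int.modEq_iff_dvd, Nat.cast_pow]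
  simp only [hiff, ← card_filter, mul_one, Nat.cast_one, one_mul, Nat.cast_id] at h
  rw [← h, pow_succ, card_range_mul_filter_sq_modEq]

end Fiber

section Prime

variable {p : ℕ} [Fact p.Prime]

theorem sqrtCount_prime (hp2 : p ≠ 2) (d : ℤ) :
    (sqrtCount p d : ℤ) = 1 + quadraticChar (ZMod p) d := by
  have hchar : ringChar (ZMod p) ≠ 2 := by rwa [ZMod.ringChar_zmod_n]
  rw [sqrtCount_eq_card_zmod, add_comm, ← quadraticChar_card_sqrts hchar]
  congr 2
  ext x
  simp

theorem not_dvd_two_mul (hp2 : p ≠ 2) {n : ℤ} (hn : ¬ (p : ℤ) ∣ n) : ¬ (p : ℤ) ∣ 2 * n := by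
  have hp : Prime (p : ℤ) := Nat.prime_iff_prime_int.1 Fact.out
  have h2 : ¬ (p : ℤ) ∣ 2 := by
    exact_mod_cast mt (Nat.prime_dvd_prime_iff_eq Fact.out Nat.prime_two).1 hp2
  exact hp.not_dvd_mul h2 hn

theorem sqrtCount_pow_add_pow_mul (hp2 : p ≠ 2) {d : ℤ} (hd : ¬ (p : ℤ) ∣ d) {k : ℕ} (hk : k ≠ 0)
    (y : ℤ) : sqrtCount (p ^ (k + 1)) (d + (p : ℤ) ^ k * y) = sqrtCount (p ^ (k + 1)) d := by
  obtain ⟨j, rfl⟩ : ∃ j, k = j + 1 := Nat.exists_eq_succ_of_ne_zero hk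
  have hp : Prime (p : ℤ) := Nat.prime_iff_prime_int.1 Fact.out
  obtain ⟨r, s, hrs⟩ : IsCoprime (2 * d) (p : ℤ) :=
    (hp.coprime_iff_not_dvd.2 (not_dvd_two_mul hp2 hd)).symm
  have hunit : IsCoprime (1 + (p : ℤ) ^ (j + 1) * (r * y)) ((p ^ (j + 1 + 1) : ℕ) : ℤ) := by
    push_cast
    exact IsCoprime.pow_right ⟨1, -((p : ℤ) ^ j * (r * y)), by ring⟩
  -- `r` inverts `2 * d` modulo `p`, so `d + p ^ k * y ≡ (1 + p ^ k * (r * y)) ^ 2 * d`.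
  rw [← sqrtCount_mul_sq hunit d]
  refine sqrtCount_congr (Int.modEq_iff_dvd.2 ⟨-(s * y) + (p : ℤ) ^ j * (d * (r * y) ^ 2), ?_⟩)
  push_cast
  linear_combination (p : ℤ) ^ (j + 1) * y * hrs

theorem sqrtCount_prime_pow (hp2 : p ≠ 2) {d : ℤ} (hd : ¬ (p : ℤ) ∣ d) (k : ℕ) :
    (sqrtCount (p ^ (k + 1)) d : ℤ) = 1 + quadraticChar (ZMod p) d := by
  induction k with
  | zero => simpa using sqrtCount_prime hp2 d
  | succ k ih =>
    have h := sum_sqrtCount_add_pow_mul (p := p) (k + 1) d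
    simp only [sqrtCount_pow_add_pow_mul hp2 hd k.succ_ne_zero, sum_const, card_univ, ZMod.card,
      smul_eq_mul] at h
    rw [Nat.eq_of_mul_eq_mul_left (NeZero.pos p) h, ih]

theorem dvd_of_sq_modEq_mul {n : ℕ} (hn : p ∣ n) {a d : ℤ} (h : a ^ 2 ≡ p * d [ZMOD n]) :
    (p : ℤ) ∣ a := by
  have hp : Prime (p : ℤ) := Nat.prime_iff_prime_int.1 Fact.out
  have hn' : (p : ℤ) ∣ n := by exact_mod_cast hn
  exact hp.dvd_of_dvd_pow ((h.of_dvd hn').dvd_iff.2 (dvd_mul_right _ _))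

theorem sqrtCount_pow_prime_mul {d : ℤ} (hd : ¬ (p : ℤ) ∣ d) (k : ℕ) :
    sqrtCount (p ^ (k + 2)) (p * d) = 0 := by
  have hp : (p : ℤ) ≠ 0 := NeZero.ne _
  rw [← card_range_filter_sq_modEq, card_eq_zero, filter_eq_empty_iff]
  intro a _ h
  obtain ⟨b, hb⟩ := dvd_of_sq_modEq_mul (dvd_pow_self p (by omega)) h
  have hsq : (a : ℤ) ^ 2 ≡ p * d [ZMOD (p : ℤ) ^ 2] :=
    h.of_dvd (by push_cast; exact pow_dvd_pow _ (by omega))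
  have hzero : (p : ℤ) * d ≡ 0 [ZMOD (p : ℤ) * p] := by
    rw [← sq]
    exact hsq.symm.trans (Int.modEq_zero_iff_dvd.2 ⟨b ^ 2, by rw [hb]; ring⟩)
  exact hd ((mul_dvd_mul_iff_left hp).1 (Int.modEq_zero_iff_dvd.1 hzero))

theorem sqrtCount_pow_prime_sq_mul (k : ℕ) (d : ℤ) :
    sqrtCount (p ^ (k + 2)) ((p : ℤ) ^ 2 * d) = p * sqrtCount (p ^ k) d := by
  have hp : (p : ℤ) ^ 2 ≠ 0 := NeZero.ne _
  have hdiv (b : ℕ) : ((p * b : ℕ) : ℤ) ^ 2 ≡ (p : ℤ) ^ 2 * d [ZMOD (p ^ (k + 2) : ℕ)] ↔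
      (b : ℤ) ^ 2 ≡ d [ZMOD (p ^ k : ℕ)] := by
    have hdiff : (p : ℤ) ^ 2 * d - ((p * b : ℕ) : ℤ) ^ 2 = (p : ℤ) ^ 2 * (d - (b : ℤ) ^ 2) := by
      push_cast; ring
    rw [Int.modEq_iff_dvd, Int.modEq_iff_dvd, hdiff, Nat.cast_pow, Nat.cast_pow, add_comm k,
      pow_add, mul_dvd_mul_iff_left hp]
  rw [← card_range_filter_sq_modEq, ← card_range_mul_filter_sq_modEq (p ^ k) p d]
  symm
  refine card_nbij (p * ·) (fun b hb => ?_)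
    (fun _ _ _ _ h => Nat.eq_of_mul_eq_mul_left (NeZero.pos p) h) (fun a ha => ?_)
  · simp only [coe_filter, mem_range, Set.mem_ofPred_eq, hdiv] at hb ⊢
    refine ⟨?_, hb.2⟩
    calc p * b < p * (p ^ k * p) := Nat.mul_lt_mul_of_pos_left hb.1 (NeZero.pos p)
      _ = p ^ (k + 2) := by ring
  · simp only [coe_filter, mem_range, Set.mem_ofPred_eq] at ha
    have hmod : (a : ℤ) ^ 2 ≡ p * (p * d) [ZMOD (p ^ (k + 2) : ℕ)] := by
      rw [← mul_assoc, ← sq]; exact ha.2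
    obtain ⟨b, rfl⟩ : p ∣ a := by
      exact_mod_cast dvd_of_sq_modEq_mul (dvd_pow_self p (by omega)) hmod
    refine ⟨b, ?_, rfl⟩
    simp only [coe_filter, mem_range, Set.mem_ofPred_eq]
    refine ⟨Nat.lt_of_mul_lt_mul_left (a := p) ?_, (hdiv b).1 ha.2⟩
    calc p * b < p ^ (k + 2) := ha.1
      _ = p * (p ^ k * p) := by ring

/-- The number of `a` modulo `p ^ (2 * v + 1)` such that `p ^ (2 * v)` divides `a ^ 2 - 4 * m` with
quotient congruent to `y` modulo `p`. These are the square roots of `4 * m + p ^ (2 * v) * y` modulo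
`p ^ (2 * v + 1)`, which is how they are encoded: the congruence involves no division. -/
def residueCount (p v : ℕ) (m : ℤ) (y : ZMod p) : ℕ :=
  sqrtCount (p ^ (2 * v + 1)) (4 * m + (p : ℤ) ^ (2 * v) * y.val)

theorem prime_mul_Klp (u v : ℕ) (m : ℤ) :
    p * Klp p u v m =
      p ^ u * ∑ y : ZMod p, residueCount p v m y * quadraticChar (ZMod p) y ^ u := by
  have hjacobi (x : ℤ) : jacobiSym x (p ^ u) = quadraticChar (ZMod p) x ^ u := by
    rw [jacobiSym.pow_right, ← jacobiSym.legendreSym.to_jacobiSym, legendreSym]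
  cases u with
  | zero =>
    have hcount : Klp p 0 v m = sqrtCount (p ^ (2 * v)) (4 * m) := by
      rw [← card_range_filter_sq_modEq, card_filter, Klp, zero_add]
      push_cast
      refine sum_congr rfl fun a _ => ?_
      simp only [pow_zero, jacobiSym.one_right, Int.modEq_comm (a := (a : ℤ) ^ 2),
        Int.modEq_iff_dvd]
    rw [hcount]
    simp only [pow_zero, mul_one, one_mul]
    exact_mod_cast (sum_sqrtCount_add_pow_mul (2 * v) (4 * m)).symm
  | succ u =>
    have hrange : p ^ (u + 1 + 2 * v) = p ^ (2 * v + 1) * p ^ u := by ring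
    simp only [Klp, hjacobi]
    rw [hrange, sum_range_ite_dvd_sq_sub (2 * v) (p ^ u) (4 * m)
      (fun y => quadraticChar (ZMod p) y ^ (u + 1)), ← mul_assoc]
    push_cast
    rw [pow_succ' (p : ℤ) u]
    rfl

theorem residueCount_zero (hp2 : p ≠ 2) (m : ℤ) (y : ZMod p) :
    (residueCount p 0 m y : ℤ) = 1 + quadraticChar (ZMod p) (4 * m + y) := by
  simpa [residueCount] using sqrtCount_prime hp2 (4 * m + y.val)

theorem residueCount_zero_of_dvd (hp2 : p ≠ 2) {m : ℤ} (hm : (p : ℤ) ∣ m) (y : ZMod p) :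
    (residueCount p 0 m y : ℤ) = 1 + quadraticChar (ZMod p) y := by
  rw [residueCount_zero hp2, (ZMod.intCast_zmod_eq_zero_iff_dvd m p).2 hm, mul_zero, zero_add]

theorem residueCount_succ_of_not_dvd (hp2 : p ≠ 2) {m : ℤ} (hm : ¬ (p : ℤ) ∣ 4 * m) (v : ℕ)
    (y : ZMod p) : (residueCount p (v + 1) m y : ℤ) = 1 + quadraticChar (ZMod p) (4 * m) := by
  rw [residueCount, sqrtCount_pow_add_pow_mul hp2 hm (by omega), sqrtCount_prime_pow hp2 hm]
  push_cast
  rfl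

theorem residueCount_succ_prime_mul {m : ℤ} (hm : ¬ (p : ℤ) ∣ 4 * m) (v : ℕ) (y : ZMod p) :
    residueCount p (v + 1) (p * m) y = 0 := by
  have hfactor : 4 * (p * m) + (p : ℤ) ^ (2 * (v + 1)) * y.val =
      p * (4 * m + p * (p ^ (2 * v) * y.val)) := by ring
  rw [residueCount, hfactor]
  exact sqrtCount_pow_prime_mul (mt (dvd_add_left (dvd_mul_right _ _)).1 hm) (2 * v + 1)

theorem residueCount_succ_prime_sq_mul (v : ℕ) (m : ℤ) (y : ZMod p) :
    residueCount p (v + 1) ((p : ℤ) ^ 2 * m) y = p * residueCount p v m y := by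
  have hfactor : 4 * ((p : ℤ) ^ 2 * m) + (p : ℤ) ^ (2 * (v + 1)) * y.val =
      (p : ℤ) ^ 2 * (4 * m + (p : ℤ) ^ (2 * v) * y.val) := by ring
  rw [residueCount, hfactor]
  exact sqrtCount_pow_prime_sq_mul (2 * v + 1) _

theorem not_dvd_four_mul (hp2 : p ≠ 2) {n : ℤ} (hn : ¬ (p : ℤ) ∣ n) : ¬ (p : ℤ) ∣ 4 * n := by
  have h4 : 4 * n = 2 * (2 * n) := by ring
  rw [h4]
  exact not_dvd_two_mul hp2 (not_dvd_two_mul hp2 hn)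

section Series

variable {K : Type*} [NormedField K]

theorem hasSum_residueCount_of_not_dvd (hp2 : p ≠ 2) {m : ℤ} (hm : ¬ (p : ℤ) ∣ 4 * m)
    {z : K} (hz : ‖z‖ < 1) (y : ZMod p) :
    HasSum (fun v => residueCount p v m y * z ^ v)
      (1 + quadraticChar (ZMod p) (4 * m + y) +
        (1 + quadraticChar (ZMod p) (4 * m)) * (z / (1 - z))) := by
  have hzero : (residueCount p 0 m y : K) = 1 + quadraticChar (ZMod p) (4 * m + y) := by
    exact_mod_cast congrArg (Int.cast : ℤ → K) (residueCount_zero hp2 m y)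
  have hsucc (v : ℕ) :
      (residueCount p (v + 1) m y : K) = 1 + quadraticChar (ZMod p) (4 * m) := by
    exact_mod_cast congrArg (Int.cast : ℤ → K) (residueCount_succ_of_not_dvd hp2 hm v y)
  have htail : HasSum (fun v => (residueCount p (v + 1) m y : K) * z ^ (v + 1))
      ((1 + quadraticChar (ZMod p) (4 * m)) * (z / (1 - z))) := by
    simpa only [hsucc, pow_succ', div_eq_mul_inv] using
      ((hasSum_geometric_of_norm_lt_one hz).mul_left z).mul_left _
  rw [← hzero]
  exact hasSum_mul_pow_of_succ (c := fun v => (residueCount p v m y : K)) htail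

theorem hasSum_residueCount_prime_mul (hp2 : p ≠ 2) {m : ℤ} (hm : ¬ (p : ℤ) ∣ 4 * m) (z : K)
    (y : ZMod p) :
    HasSum (fun v => residueCount p v (p * m) y * z ^ v) (1 + quadraticChar (ZMod p) y) := by
  have hzero : (residueCount p 0 (p * m) y : K) = 1 + quadraticChar (ZMod p) y := by
    exact_mod_cast congrArg (Int.cast : ℤ → K) (residueCount_zero_of_dvd hp2 (dvd_mul_right _ m) y)
  have htail : HasSum (fun v => (residueCount p (v + 1) (p * m) y : K) * z ^ (v + 1)) 0 := by
    simpa only [residueCount_succ_prime_mul hm, Nat.cast_zero, zero_mul] using hasSum_zero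
  rw [← hzero, ← add_zero (residueCount p 0 (p * m) y : K)]
  exact hasSum_mul_pow_of_succ (c := fun v => (residueCount p v (p * m) y : K)) htail

theorem hasSum_residueCount_prime_sq_mul (hp2 : p ≠ 2) {m : ℤ} {z W : K} {y : ZMod p}
    (hW : HasSum (fun v => residueCount p v m y * z ^ v) W) :
    HasSum (fun v => residueCount p v ((p : ℤ) ^ 2 * m) y * z ^ v)
      (1 + quadraticChar (ZMod p) y + p * z * W) := by
  have hzero : (residueCount p 0 ((p : ℤ) ^ 2 * m) y : K) = 1 + quadraticChar (ZMod p) y := by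
    exact_mod_cast congrArg (Int.cast : ℤ → K)
      (residueCount_zero_of_dvd hp2 (dvd_mul_of_dvd_left (dvd_pow_self _ two_ne_zero) m) y)
  have htail : HasSum
      (fun v => (residueCount p (v + 1) ((p : ℤ) ^ 2 * m) y : K) * z ^ (v + 1)) (p * z * W) := by
    refine (hW.mul_left (p * z)).congr_fun fun v => ?_
    rw [residueCount_succ_prime_sq_mul]
    push_cast
    ring
  rw [← hzero]
  exact hasSum_mul_pow_of_succ (c := fun v => (residueCount p v ((p : ℤ) ^ 2 * m) y : K)) htail

theorem exists_hasSum_residueCount (hp2 : p ≠ 2) {n : ℤ} (hn : ¬ (p : ℤ) ∣ n) (hpK : (p : K) ≠ 0)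
    {X : K} (hX : ‖X‖ < 1) (hz : ‖X ^ 2 / p‖ < 1) (k : ℕ) :
    ∃ W : ZMod p → K,
      (∀ y, HasSum (fun v => residueCount p v ((p : ℤ) ^ k * n) y * (X ^ 2 / p) ^ v) (W y)) ∧
      ∑ y, W y * (1 - X * quadraticChar (ZMod p) y)⁻¹ =
        (p - X) / (1 - X ^ 2) * ((1 - X ^ (k + 1)) / (1 - X)) := by
  have hchar : ringChar (ZMod p) ≠ 2 := by rwa [ZMod.ringChar_zmod_n]
  have hn4 : ¬ (p : ℤ) ∣ 4 * n := not_dvd_four_mul hp2 hn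
  have hX1 : 1 - X ≠ 0 := (isUnit_one_sub_of_norm_lt_one hX).ne_zero
  have hX2 : 1 - X ^ 2 ≠ 0 := (isUnit_one_sub_of_norm_lt_one
    (by rw [norm_pow]; exact pow_lt_one₀ (norm_nonneg X) hX two_ne_zero)).ne_zero
  induction k using Nat.twoStepInduction with
  | zero =>
    have hz1 : 1 - X ^ 2 / p ≠ 0 := (isUnit_one_sub_of_norm_lt_one hz).ne_zero
    have hc : (4 * n : ZMod p) ≠ 0 := fun h =>
      hn4 ((ZMod.intCast_zmod_eq_zero_iff_dvd _ p).1 (by exact_mod_cast h))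
    simp only [pow_zero, one_mul]
    refine ⟨_, hasSum_residueCount_of_not_dvd hp2 hn4 hz, ?_⟩
    rw [sum_one_add_quadraticChar_add_mul_inv hchar hX2 hc, ZMod.card]
    have hpX : (p : K) - X ^ 2 ≠ 0 := by simpa [one_sub_div hpK, hpK] using hz1
    field_simp
    ring
  | one =>
    simp only [pow_one]
    refine ⟨_, hasSum_residueCount_prime_mul hp2 hn4 _, ?_⟩
    rw [sum_one_add_quadraticChar_mul_inv hchar hX2, ZMod.card]
    field_simp
  | more k ih _ =>
    obtain ⟨W, hW, hsum⟩ := ih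
    have hpow : (p : ℤ) ^ (k + 2) * n = p ^ 2 * (p ^ k * n) := by ring
    simp only [hpow]
    refine ⟨_, fun y => hasSum_residueCount_prime_sq_mul hp2 (hW y), ?_⟩
    simp only [add_mul _ (_ * _), mul_assoc _ (W _), sum_add_distrib, ← mul_sum, hsum]
    rw [sum_one_add_quadraticChar_mul_inv hchar hX2, ZMod.card]
    field_simp
    ring

end Series

theorem norm_mul_quadraticChar_lt_one {K : Type*} [NormedField K] {X : K} (hX : ‖X‖ < 1)
    (y : ZMod p) : ‖X * quadraticChar (ZMod p) y‖ < 1 := by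
  rcases eq_or_ne y 0 with rfl | hy
  · simp
  · rcases quadraticChar_dichotomy hy with h | h <;> simpa [h] using hX

theorem Klp_mul_pow_mul_pow {K : Type*} [Field K] (hpK : (p : K) ≠ 0) (X z : K) (u v : ℕ) (m : ℤ) :
    Klp p u v m * (X / p) ^ u * z ^ v =
      (p : K)⁻¹ * ∑ y : ZMod p,
        (X * quadraticChar (ZMod p) y) ^ u * (residueCount p v m y * z ^ v) := by
  have hKlp : (p * Klp p u v m : K) = p ^ u *
      ∑ y : ZMod p, residueCount p v m y * (quadraticChar (ZMod p) y : K) ^ u := by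
    exact_mod_cast congrArg (Int.cast : ℤ → K) (prime_mul_Klp u v m)
  rw [eq_inv_mul_iff_mul_eq₀ hpK, ← mul_assoc, ← mul_assoc, hKlp, div_pow]
  simp only [mul_sum, sum_mul, mul_pow]
  refine sum_congr rfl fun y _ => ?_
  field_simp

theorem hasSum_Klp_of_hasSum_residueCount {X z : ℂ} (hX : ‖X‖ < 1) {m : ℤ}
    {W : ZMod p → ℂ} (hW : ∀ y, HasSum (fun v => residueCount p v m y * z ^ v) (W y)) :
    HasSum (fun uv : ℕ × ℕ => Klp p uv.1 uv.2 m * (X / p) ^ uv.1 * z ^ uv.2)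
      ((p : ℂ)⁻¹ * ∑ y, W y * (1 - X * quadraticChar (ZMod p) y)⁻¹) := by
  simp only [Klp_mul_pow_mul_pow (NeZero.ne (p : ℂ)), mul_comm (W _)]
  exact (hasSum_sum fun y _ => hasSum_pow_mul (norm_mul_quadraticChar_lt_one hX y) (hW y)
    (hW y).summable.norm).mul_left _

theorem hasSum_Klp_s5 (hp2 : p ≠ 2) {n : ℤ} (hn : ¬ (p : ℤ) ∣ n) {X : ℂ} (hX : ‖X‖ < 1) (k : ℕ) :
    HasSum (fun uv : ℕ × ℕ => Klp p uv.1 uv.2 ((p : ℤ) ^ k * n) * (X / p) ^ uv.1 *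
      (X ^ 2 / p) ^ uv.2) ((1 - X / p) / (1 - X ^ 2) * ((1 - X ^ (k + 1)) / (1 - X))) := by
  have hp : (p : ℂ) ≠ 0 := NeZero.ne _
  have hz : ‖X ^ 2 / p‖ < 1 := by
    have hp1 : (1 : ℝ) ≤ p := by exact_mod_cast NeZero.one_le
    rw [norm_div, norm_pow, Complex.norm_natCast]
    exact (div_le_self (by positivity) hp1).trans_lt (pow_lt_one₀ (norm_nonneg X) hX two_ne_zero)
  obtain ⟨W, hW, hsum⟩ := exists_hasSum_residueCount hp2 hn hp hX hz k
  convert hasSum_Klp_of_hasSum_residueCount hX hW using 1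
  rw [hsum]
  field_simp

end Prime

theorem cpow_neg_mul_add_one {p : ℂ} (hp : p ≠ 0) (s : ℂ) (u : ℕ) :
    p ^ (-(u : ℂ) * (s + 1)) = (p ^ (-s) / p) ^ u := by
  have hexp : -(u : ℂ) * (s + 1) = u * (-s - 1) := by ring
  rw [hexp, Complex.cpow_nat_mul, Complex.cpow_sub _ _ hp, Complex.cpow_one]

theorem stmt5_general (p : ℕ) (hp : p.Prime) (hp2 : p ≠ 2) (m : ℤ) (hm : m ≠ 0)
    (s : ℂ) (hs : 0 < s.re) :
    Summable (fun uv : ℕ × ℕ =>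
      ‖(Klp p uv.1 uv.2 m : ℂ) * (p:ℂ) ^ (-(uv.1:ℂ) * (s+1)) * (p:ℂ) ^ (-(uv.2:ℂ) * (2*s+1))‖) ∧
    ∑' uv : ℕ × ℕ,
        (Klp p uv.1 uv.2 m : ℂ) * (p:ℂ) ^ (-(uv.1:ℂ) * (s+1)) * (p:ℂ) ^ (-(uv.2:ℂ) * (2*s+1))
      = (1 - (p:ℂ) ^ (-(s+1))) / (1 - (p:ℂ) ^ (-(2*s)))
        * ((1 - (p:ℂ) ^ (-s * ((padicValInt p m : ℂ) + 1))) / (1 - (p:ℂ) ^ (-s))) := by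
  have : Fact p.Prime := ⟨hp⟩
  have hp0 : (p : ℂ) ≠ 0 := NeZero.ne _
  obtain ⟨n, hn, hmn⟩ := exists_eq_pow_padicValInt_mul hp hm
  have hX : ‖(p : ℂ) ^ (-s)‖ < 1 := by
    rw [Complex.norm_natCast_cpow_of_pos hp.pos]
    exact Real.rpow_lt_one_of_one_lt_of_neg (by exact_mod_cast hp.one_lt) (by simpa using hs)
  have hXpow (k : ℕ) : ((p : ℂ) ^ (-s)) ^ k = (p : ℂ) ^ (-s * k) := by
    rw [mul_comm, Complex.cpow_nat_mul]
  have hX2 : (p : ℂ) ^ (-(2 * s)) = ((p : ℂ) ^ (-s)) ^ 2 := by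
    rw [hXpow]; congr 1; push_cast; ring
  have hXp : (p : ℂ) ^ (-(s + 1)) = (p : ℂ) ^ (-s) / p := by
    simpa using cpow_neg_mul_add_one hp0 s 1
  have hXk : (p : ℂ) ^ (-s * ((padicValInt p m : ℂ) + 1)) =
      ((p : ℂ) ^ (-s)) ^ (padicValInt p m + 1) := by
    rw [hXpow]; push_cast; rfl
  have hsum := hasSum_Klp_s5 hp2 hn hX (padicValInt p m)
  rw [← hmn, ← hX2] at hsum
  simp only [← cpow_neg_mul_add_one hp0] at hsum
  rw [← hXp, ← hXk] at hsum
  exact ⟨hsum.summable.norm, hsum.tsum_eq⟩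

theorem stmt5 (p : ℕ) (hp : p.Prime) (hp2 : p ≠ 2) (m : ℤ) (hm : m ≠ 0)
    (hpm : (p:ℤ) ∣ m) (s : ℂ) (hs : 0 < s.re) :
    Summable (fun uv : ℕ × ℕ =>
      ‖(Klp p uv.1 uv.2 m : ℂ) * (p:ℂ) ^ (-(uv.1:ℂ) * (s+1)) * (p:ℂ) ^ (-(uv.2:ℂ) * (2*s+1))‖) ∧
    ∑' uv : ℕ × ℕ,
        (Klp p uv.1 uv.2 m : ℂ) * (p:ℂ) ^ (-(uv.1:ℂ) * (s+1)) * (p:ℂ) ^ (-(uv.2:ℂ) * (2*s+1))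
      = (1 - (p:ℂ) ^ (-(s+1))) / (1 - (p:ℂ) ^ (-(2*s)))
        * ((1 - (p:ℂ) ^ (-s * ((padicValInt p m : ℂ) + 1))) / (1 - (p:ℂ) ^ (-s))) :=
  stmt5_general p hp hp2 m hm s hs
end

section
/- Let ϑ > 0, let Φ : (0, ∞) → ℝ be a smooth function all of whose derivatives have rapid decay (for every a ∈ ℕ and every A > 0 there is a constant C with |Φ^{(a)}(x)| ≤ C·x^{−A} for all x ≥ 1), and let g₁, g₂ : ℝ → ℝ be smooth functions. Then the function h : ℝ → ℝ defined by h(x) = (2|x² − 1|^{1/2}·g₁(x) + g₂(x))·Φ(|x² − 1|^{−ϑ}) for x ≠ ±1 and h(1) = h(−1) = 0 is smooth on all of ℝ. -/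
/-!
Let `F s Φ u = |u| ^ s Φ(|u| ^ (-ϑ))` for `u ≠ 0`, extended by `0` at the origin. Rapid decay of `Φ`
makes `F s Φ` vanish to infinite order at `0`, so that everywhere
`(F s Φ)' = u (s F (s - 2) Φ - ϑ F (s - ϑ - 2) Φ')`.
Since `Φ'` satisfies the same assumptions as `Φ`, induction on the order of differentiability shows
that `F s Φ` is smooth for every real `s`. The function of the theorem is
`2 g₁(x) F (1/2) Φ (x² - 1) + g₂(x) F 0 Φ (x² - 1)`.
-/

open Asymptotics Filter Set Topology
open scoped ContDiff

lemma hasDerivAt_abs_rpow_of_ne_zero (s : ℝ) {u : ℝ} (hu : u ≠ 0) :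
    HasDerivAt (fun v : ℝ ↦ |v| ^ s) (s * |u| ^ (s - 2) * u) u := by
  have habs : 0 < |u| := abs_pos.mpr hu
  have hsplit : |u| ^ (s - 1) = |u| ^ (s - 2) * |u| := by
    rw [← Real.rpow_add_one habs.ne']
    ring_nf
  refine ((hasDerivAt_abs hu).rpow_const (p := s) (Or.inl habs.ne')).congr_deriv ?_
  rw [hsplit]
  linear_combination s * |u| ^ (s - 2) * sign_mul_abs u

lemma tendsto_abs_rpow_neg_nhdsNE_zero {ϑ : ℝ} (hϑ : 0 < ϑ) :
    Tendsto (fun u : ℝ ↦ |u| ^ (-ϑ)) (𝓝[≠] 0) atTop :=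
  (tendsto_rpow_neg_nhdsGT_zero (neg_lt_zero.mpr hϑ)).comp tendsto_abs_nhdsNE_zero

lemma isBigO_rpow_atTop_of_forall_pos {E : Type*} [SeminormedAddCommGroup E] {f : ℝ → E}
    (hf : ∀ A : ℝ, 0 < A → ∃ C : ℝ, ∀ x : ℝ, 1 ≤ x → ‖f x‖ ≤ C * x ^ (-A)) (r : ℝ) :
    f =O[atTop] fun x : ℝ ↦ x ^ r := by
  obtain ⟨C, hC⟩ := hf (max 1 (-r)) (by positivity)
  refine IsBigO.of_bound |C| ?_
  filter_upwards [eventually_ge_atTop 1] with x hx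
  have : 0 < x := one_pos.trans_le hx
  calc ‖f x‖ ≤ C * x ^ (-max 1 (-r)) := hC x hx
    _ ≤ |C| * x ^ r := by
      gcongr
      · exact le_abs_self C
      · exact neg_le.mp (le_max_right 1 (-r))
    _ = |C| * ‖x ^ r‖ := by rw [Real.norm_of_nonneg (by positivity)]

section RapidDecay

variable {E : Type*} [NormedAddCommGroup E] [NormedSpace ℝ E] {Φ : ℝ → E} {ϑ : ℝ}

/-- `Φ` is smooth on `(0, ∞)` and all its derivatives decay faster than any power at infinity.
Nothing is required of the behaviour of `Φ` at `0`. -/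
structure IsRapidlyDecaying (Φ : ℝ → E) : Prop where
  contDiffOn : ContDiffOn ℝ ∞ Φ (Ioi 0)
  isBigO_iteratedDerivWithin (n : ℕ) (r : ℝ) :
    iteratedDerivWithin n Φ (Ioi 0) =O[atTop] fun x ↦ x ^ r

namespace IsRapidlyDecaying

protected lemma isBigO (hΦ : IsRapidlyDecaying Φ) (r : ℝ) : Φ =O[atTop] fun x ↦ x ^ r := by
  simpa only [iteratedDerivWithin_zero] using hΦ.isBigO_iteratedDerivWithin 0 r

protected lemma derivWithin (hΦ : IsRapidlyDecaying Φ) :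
    IsRapidlyDecaying (derivWithin Φ (Ioi 0)) where
  contDiffOn := ((contDiffOn_infty_iff_derivWithin (uniqueDiffOn_Ioi 0)).mp hΦ.contDiffOn).2
  isBigO_iteratedDerivWithin n r := by
    simpa only [iteratedDerivWithin_succ'] using hΦ.isBigO_iteratedDerivWithin (n + 1) r

protected lemma hasDerivAt (hΦ : IsRapidlyDecaying Φ) {t : ℝ} (ht : 0 < t) :
    HasDerivAt Φ (derivWithin Φ (Ioi 0) t) t :=
  (hΦ.contDiffOn.differentiableOn (by simp) t ht).hasDerivWithinAt.hasDerivAt (Ioi_mem_nhds ht)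

lemma isBigO_comp_abs_rpow (hΦ : IsRapidlyDecaying Φ) (hϑ : 0 < ϑ) (r : ℝ) :
    (fun u : ℝ ↦ Φ (|u| ^ (-ϑ))) =O[𝓝[≠] 0] fun u ↦ |u| ^ r := by
  refine ((hΦ.isBigO (-r / ϑ)).comp_tendsto (tendsto_abs_rpow_neg_nhdsNE_zero hϑ)).congr_right ?_
  intro u
  rw [Function.comp_apply, ← Real.rpow_mul (abs_nonneg u)]
  congr 1
  field_simp

end IsRapidlyDecaying

/-- The function `u ↦ |u| ^ s • Φ (|u| ^ (-ϑ))` on `u ≠ 0`, extended by zero; the real exponent `s`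
is free so that the family is closed under differentiation. The value at `0` has to be imposed
because `0 ^ (-ϑ) = 0` in Lean, so that the formula would see the irrelevant value `Φ 0`. -/
noncomputable def flatExtension (ϑ s : ℝ) (Φ : ℝ → E) : ℝ → E :=
  Function.update (fun u ↦ |u| ^ s • Φ (|u| ^ (-ϑ))) 0 0

@[simp]
lemma flatExtension_zero (ϑ s : ℝ) (Φ : ℝ → E) : flatExtension ϑ s Φ 0 = 0 :=
  Function.update_self ..

lemma flatExtension_of_ne_zero (ϑ s : ℝ) (Φ : ℝ → E) {u : ℝ} (hu : u ≠ 0) :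
    flatExtension ϑ s Φ u = |u| ^ s • Φ (|u| ^ (-ϑ)) :=
  Function.update_of_ne hu ..

lemma flatExtension_eventuallyEq (ϑ s : ℝ) (Φ : ℝ → E) {l : Filter ℝ} (hl : ∀ᶠ u in l, u ≠ 0) :
    flatExtension ϑ s Φ =ᶠ[l] fun u ↦ |u| ^ s • Φ (|u| ^ (-ϑ)) :=
  hl.mono fun _ ↦ flatExtension_of_ne_zero ϑ s Φ

namespace IsRapidlyDecaying

lemma isBigO_flatExtension (hΦ : IsRapidlyDecaying Φ) (hϑ : 0 < ϑ) (s r : ℝ) :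
    flatExtension ϑ s Φ =O[𝓝 0] fun u ↦ |u| ^ r := by
  have hne : flatExtension ϑ s Φ =O[𝓝[≠] 0] fun u ↦ |u| ^ r := by
    refine (flatExtension_eventuallyEq ϑ s Φ eventually_mem_nhdsWithin).trans_isBigO ?_
    refine ((isBigO_refl (fun u : ℝ ↦ |u| ^ s) _).smul
      (hΦ.isBigO_comp_abs_rpow hϑ (r - s))).congr' .rfl ?_
    filter_upwards [eventually_mem_nhdsWithin] with u hu
    rw [smul_eq_mul, ← Real.rpow_add (abs_pos.mpr hu), add_sub_cancel]
  rw [← nhdsNE_sup_pure]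
  exact hne.sup (isBigO_pure.mpr fun _ ↦ flatExtension_zero ϑ s Φ)

lemma hasDerivAt_flatExtension_zero (hΦ : IsRapidlyDecaying Φ) (hϑ : 0 < ϑ) (s : ℝ) :
    HasDerivAt (flatExtension ϑ s Φ) 0 0 := by
  have hquad : flatExtension ϑ s Φ =O[𝓝 0] fun u ↦ ‖u - 0‖ ^ 2 := by
    simpa using hΦ.isBigO_flatExtension hϑ s 2
  simpa using (hquad.hasFDerivAt (𝕜 := ℝ) one_lt_two).hasDerivAt

lemma hasDerivAt_flatExtension (hΦ : IsRapidlyDecaying Φ) (hϑ : 0 < ϑ) (s u : ℝ) :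
    HasDerivAt (flatExtension ϑ s Φ)
      (u • (s • flatExtension ϑ (s - 2) Φ u
        - ϑ • flatExtension ϑ (s - ϑ - 2) (derivWithin Φ (Ioi 0)) u)) u := by
  obtain rfl | hu := eq_or_ne u 0
  · simpa using hΦ.hasDerivAt_flatExtension_zero hϑ s
  have habs : 0 < |u| := abs_pos.mpr hu
  have hcomp := (hΦ.hasDerivAt (Real.rpow_pos_of_pos habs (-ϑ))).scomp u
    (hasDerivAt_abs_rpow_of_ne_zero (-ϑ) hu)
  have hpow : |u| ^ (s - ϑ - 2) = |u| ^ s * |u| ^ (-ϑ - 2) := by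
    rw [← Real.rpow_add habs]
    ring_nf
  refine (((hasDerivAt_abs_rpow_of_ne_zero s hu).smul hcomp).congr_of_eventuallyEq
    (flatExtension_eventuallyEq ϑ s Φ (eventually_ne_nhds hu))).congr_deriv ?_
  rw [flatExtension_of_ne_zero _ _ _ hu, flatExtension_of_ne_zero _ _ _ hu, hpow,
    Function.comp_apply]
  module

lemma contDiff_flatExtension (hΦ : IsRapidlyDecaying Φ) (hϑ : 0 < ϑ) (s : ℝ) :
    ContDiff ℝ ∞ (flatExtension ϑ s Φ) := by
  refine contDiff_infty.mpr fun n ↦ ?_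
  induction n generalizing Φ s with
  | zero =>
    exact contDiff_zero.mpr <| continuous_iff_continuousAt.mpr fun u ↦
      (hΦ.hasDerivAt_flatExtension hϑ s u).continuousAt
  | succ n ih =>
    have hderiv := hΦ.hasDerivAt_flatExtension hϑ s
    rw [Nat.cast_succ, contDiff_succ_iff_deriv]
    refine ⟨fun u ↦ (hderiv u).differentiableAt, by simp, ?_⟩
    rw [funext fun u ↦ (hderiv u).deriv]
    exact contDiff_id.smul (((ih hΦ _).const_smul s).sub ((ih hΦ.derivWithin _).const_smul ϑ))

end IsRapidlyDecaying

end RapidDecay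

/-- If `Φ` is smooth on `(0,∞)` with all derivatives of rapid decay and `g₁, g₂` are smooth,
then `h(x) = (2|x²−1|^{1/2} g₁(x) + g₂(x))·Φ(|x²−1|^{−ϑ})` (extended by `0` at `x = ±1`)
is smooth on all of `ℝ`. -/
theorem stmt19 (ϑ : ℝ) (hϑ : 0 < ϑ) (Φ : ℝ → ℝ)
    (hΦ : ContDiffOn ℝ (⊤ : ℕ∞) Φ (Set.Ioi 0))
    (hdecay : ∀ a : ℕ, ∀ A : ℝ, 0 < A → ∃ C : ℝ, ∀ x : ℝ, 1 ≤ x →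
      |iteratedDerivWithin a Φ (Set.Ioi 0) x| ≤ C * x ^ (-A))
    (g₁ g₂ : ℝ → ℝ) (hg₁ : ContDiff ℝ (⊤ : ℕ∞) g₁) (hg₂ : ContDiff ℝ (⊤ : ℕ∞) g₂)
    (h : ℝ → ℝ)
    (hh : ∀ x : ℝ, x ≠ 1 → x ≠ -1 →
      h x = (2 * |x^2 - 1| ^ ((1:ℝ)/2) * g₁ x + g₂ x) * Φ (|x^2 - 1| ^ (-ϑ)))
    (h1 : h 1 = 0) (hm1 : h (-1) = 0) :
    ContDiff ℝ (⊤ : ℕ∞) h := by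
  have hΦ' : IsRapidlyDecaying Φ := ⟨hΦ, fun n ↦ isBigO_rpow_atTop_of_forall_pos (hdecay n)⟩
  have hsmooth (s : ℝ) : ContDiff ℝ ∞ fun x : ℝ ↦ flatExtension ϑ s Φ (x ^ 2 - 1) :=
    (hΦ'.contDiff_flatExtension hϑ s).comp (by fun_prop)
  have h_eq : h = fun x ↦ 2 * g₁ x * flatExtension ϑ (1 / 2) Φ (x ^ 2 - 1)
      + g₂ x * flatExtension ϑ 0 Φ (x ^ 2 - 1) := by
    funext x
    obtain rfl | hx₁ := eq_or_ne x 1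
    · simp [h1]
    obtain rfl | hx₂ := eq_or_ne x (-1)
    · simp [hm1]
    have hx : x ^ 2 - 1 ≠ 0 := sub_ne_zero.mpr (sq_ne_one_iff.mpr ⟨hx₁, hx₂⟩)
    rw [hh x hx₁ hx₂, flatExtension_of_ne_zero _ _ _ hx, flatExtension_of_ne_zero _ _ _ hx,
      smul_eq_mul, smul_eq_mul, Real.rpow_zero]
    ring
  rw [h_eq]
  exact ((contDiff_const.mul hg₁).mul (hsmooth _)).add (hg₂.mul (hsmooth _))
end
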